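/- Assume (H1)–(H6) and the growth condition ρ(v) ≤ C(1+‖v‖_V^α)(1+‖i v‖_H^β). Let x∈H and let g:𝕏_T→[0,∞) be measurable with L_T(g)<∞. If X¹ (with V-valued representative u¹) and X² (with V-valued representative u²) are both solutions of the skeleton equation with initial value x and control g, then X¹_t = X²_t for every t∈[0,T]. -/

import Mathlib

open MeasureTheory Real Filter
open scoped ENNReal RealInnerProductSpace

/-- A solution of the skeleton equation with initial value `x` and control `g`:
a continuous `H`-valued path `X` on `[0,T]` together with a strongly measurable
`V`-valued representative `u` with `i ∘ u = X` a.e., `∫_0^T ‖u_t‖_V^α dt < ∞`, and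
`⟪X_t, i v⟫ = ⟪x, i v⟫ + ∫_0^t ⟨𝒜(s,u_s), v⟩ ds + ∫_0^t ∫_𝕏 ⟪f(s,u_s,z), i v⟫ (g(s,z)-1) ν(dz) ds`
for all `t ∈ [0,T]`, `v ∈ V`. -/
def IsSkeletonSolution {𝕏 H V : Type*} [MeasurableSpace 𝕏]
    [NormedAddCommGroup H] [InnerProductSpace ℝ H]
    [NormedAddCommGroup V] [NormedSpace ℝ V]
    (T α : ℝ) (ν : Measure 𝕏) (i : V →L[ℝ] H) (A : ℝ → V → (V →L[ℝ] ℝ))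
    (f : ℝ → V → 𝕏 → H) (x : H) (g : ℝ × 𝕏 → ℝ) (X : ℝ → H) (u : ℝ → V) : Prop :=
  ContinuousOn X (Set.Icc 0 T) ∧ StronglyMeasurable u ∧
  (∀ᵐ t ∂(volume.restrict (Set.Icc 0 T)), i (u t) = X t) ∧
  (∫⁻ t in Set.Icc 0 T, ENNReal.ofReal (‖u t‖ ^ α)) < ⊤ ∧
  ∀ t ∈ Set.Icc 0 T, ∀ v : V,
    ⟪X t, i v⟫ = ⟪x, i v⟫ + (∫ s in Set.Icc 0 t, A s (u s) v)
      + ∫ s in Set.Icc 0 t, ∫ z, ⟪f s (u s) z, i v⟫ * (g (s, z) - 1) ∂ν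

/-!
The difference `Y = X₁ - X₂` of two solutions has a weak derivative in `V*`, and the heart of the
matter is the energy inequality `‖Y t‖² ≤ ‖Y 0‖² + 2 ∫ ⟨Y', w⟩` for `w = u₁ - u₂`. It needs no
chain rule in the Gelfand triple: average `‖Y s‖² - ‖Y (s - h)‖² ≤ 2 ⟪Y s - Y (s - h), Y s⟫` over
`s`, test the weak equation with `w s`, and replace `w s` by `w r` inside the resulting integral
over `r ∈ (s - h, s]`; by continuity of translations in `L^p` the error is `o(h)`. Local
monotonicity and Gronwall's inequality then give `Y = 0`. The coefficient in Gronwall's inequality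
is only integrable; its jump part `G_f |g - 1|` is so because the exponential moments of `G_f` pair
with the entropy of `g`.
-/

section Entropy

open InformationTheory

theorem mul_abs_sub_one_le {x b : ℝ} (hx : 0 ≤ x) (hb : 0 ≤ b) :
    x * |b - 1| ≤ exp x - 1 - x + klFun b := by
  have young (y : ℝ) : y * (b - 1) ≤ exp y - 1 - y + klFun b := by
    unfold klFun
    rcases hb.eq_or_lt with rfl | hb
    · linarith [exp_pos y]
    · have h := add_one_le_exp (y - log b)
      rw [exp_sub, exp_log hb, le_div_iff₀ hb] at h
      linarith
  have hsinh : exp (-x) - 1 + x ≤ exp x - 1 - x := by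
    have := self_le_sinh_iff.2 hx
    rw [sinh_eq] at this
    linarith
  rcases abs_cases (b - 1) with ⟨h, -⟩ | ⟨h, -⟩ <;> rw [h]
  · exact young x
  · linarith [young (-x)]

variable {Ω : Type*} [MeasurableSpace Ω] {μ : Measure Ω} {h g : Ω → ℝ} {p δ : ℝ}

theorem integrable_of_lintegral_ofReal_lt_top {φ : Ω → ℝ} (hφm : Measurable φ)
    (hφ0 : ∀ q, 0 ≤ φ q) (hφ : ∫⁻ q, ENNReal.ofReal (φ q) ∂μ < ⊤) : Integrable φ μ :=
  (lintegral_ofReal_ne_top_iff_integrable hφm.aestronglyMeasurable (ae_of_all _ hφ0)).1 hφ.ne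

/-- The class `ℋ_p` of functions `h` for which some `exp (δ * h ^ p)` with `δ > 0` is integrable
over every set of finite measure. -/
def HasLocalExpMoment (h : Ω → ℝ) (p : ℝ) (μ : Measure Ω) : Prop :=
  ∃ δ : ℝ, 0 < δ ∧ ∀ Γ : Set Ω, MeasurableSet Γ → μ Γ < ⊤ →
    ∫⁻ q in Γ, ENNReal.ofReal (exp (δ * h q ^ p)) ∂μ < ⊤

theorem exp_mul_le_exp_mul_exp_mul_rpow {x : ℝ} (hx : 0 ≤ x) (hp : 1 ≤ p) (hδ : 0 ≤ δ) :
    exp (δ * x) ≤ exp δ * exp (δ * x ^ p) := by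
  have hxp : x ≤ 1 + x ^ p := by
    rcases le_total x 1 with h1 | h1
    · linarith [rpow_nonneg hx p]
    · linarith [self_le_rpow_of_one_le h1 hp]
  rw [← exp_add, exp_le_exp]
  linarith [mul_le_mul_of_nonneg_left hxp hδ]

theorem HasLocalExpMoment.exists_integrable_exp_sub (hexp : HasLocalExpMoment h p μ) (hp : 1 ≤ p)
    (hm : Measurable h) (h0 : ∀ q, 0 ≤ h q) (hsq : Integrable (fun q => h q ^ 2) μ) :
    ∃ δ : ℝ, 0 < δ ∧ Integrable (fun q => exp (δ * h q) - 1 - δ * h q) μ := by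
  obtain ⟨δ, hδ, hexp⟩ := hexp
  refine ⟨δ, hδ, ?_⟩
  set Γ : Set Ω := {q | 1 ≤ δ ^ 2 * h q ^ 2}
  have hΓ : MeasurableSet Γ := measurableSet_le measurable_const (by fun_prop)
  have hΓfin : μ Γ < ⊤ := (hsq.const_mul (δ ^ 2)).measure_ge_lt_top one_pos
  have hexpint : IntegrableOn (fun q => exp (δ * h q ^ p)) Γ μ :=
    integrable_of_lintegral_ofReal_lt_top (by fun_prop) (fun q => exp_nonneg _) (hexp Γ hΓ hΓfin)
  refine ((hsq.const_mul (δ ^ 2)).add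
    (IntegrableOn.integrable_indicator (hexpint.const_mul (exp δ)) hΓ)).mono' (by fun_prop)
    (ae_of_all _ fun q => ?_)
  have hδh : 0 ≤ δ * h q := mul_nonneg hδ.le (h0 q)
  rw [norm_of_nonneg (by linarith [add_one_le_exp (δ * h q)]), Pi.add_apply]
  by_cases hq : q ∈ Γ
  · rw [Set.indicator_of_mem hq]
    have := exp_mul_le_exp_mul_exp_mul_rpow (h0 q) hp hδ.le
    have : 0 ≤ δ ^ 2 * h q ^ 2 := by positivity
    linarith
  · have hsmall : |δ * h q| ≤ 1 := by
      rw [← sq_le_one_iff_abs_le_one, mul_pow]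
      exact (not_le.1 hq).le
    rw [Set.indicator_of_notMem hq, add_zero, ← mul_pow]
    exact (le_abs_self _).trans (abs_exp_sub_one_sub_id_le hsmall)

/-- The Young inequality behind this pairs `exp x - 1 - x`, quadratic near `0`, with the
entropy, so that `h` need not be integrable. -/
theorem HasLocalExpMoment.integrable_mul_abs_sub_one (hexp : HasLocalExpMoment h p μ) (hp : 1 ≤ p)
    (hm : Measurable h) (h0 : ∀ q, 0 ≤ h q) (hsq : ∫⁻ q, ENNReal.ofReal (h q ^ 2) ∂μ < ⊤)
    (gm : Measurable g) (g0 : ∀ q, 0 ≤ g q) (hg : ∫⁻ q, ENNReal.ofReal (klFun (g q)) ∂μ < ⊤) :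
    Integrable (fun q => h q * |g q - 1|) μ := by
  have hg : Integrable (fun q => klFun (g q)) μ :=
    integrable_of_lintegral_ofReal_lt_top (by fun_prop) (fun q => klFun_nonneg (g0 q)) hg
  obtain ⟨δ, hδ, hδint⟩ := hexp.exists_integrable_exp_sub hp hm h0
    (integrable_of_lintegral_ofReal_lt_top (by fun_prop) (fun q => sq_nonneg _) hsq)
  rw [← integrable_const_mul_iff (isUnit_iff_ne_zero.2 hδ.ne')]
  refine (hδint.add hg).mono' (by fun_prop) (ae_of_all _ fun q => ?_)
  have hδh : 0 ≤ δ * h q := mul_nonneg hδ.le (h0 q)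
  rw [norm_of_nonneg (mul_nonneg hδ.le (mul_nonneg (h0 q) (abs_nonneg _))), ← mul_assoc]
  exact mul_abs_sub_one_le hδh (g0 q)

end Entropy

section Gronwall

theorem absolutelyContinuousOnInterval_comp_of_locallyLipschitz {E Y : Type*}
    [SeminormedAddCommGroup E] [PseudoMetricSpace Y] {φ : E → Y} {f : ℝ → E} {a b : ℝ}
    (hφ : LocallyLipschitz φ) (hf : AbsolutelyContinuousOnInterval f a b) :
    AbsolutelyContinuousOnInterval (fun s => φ (f s)) a b := by
  obtain ⟨K, hK⟩ : ∃ K, LipschitzOnWith K φ (f '' Set.uIcc a b) :=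
    hφ.locallyLipschitzOn.exists_lipschitzOnWith_of_compact
      (isCompact_uIcc.image_of_continuousOn hf.continuousOn)
  have hKf := Tendsto.const_mul (K : ℝ) hf
  rw [mul_zero] at hKf
  refine squeeze_zero' (.of_forall fun J => Finset.sum_nonneg fun _ _ => dist_nonneg) ?_ hKf
  filter_upwards [mem_inf_of_right (mem_principal_self _)] with J hJ
  simp only [Finset.mul_sum]
  refine Finset.sum_le_sum fun j hj => ?_
  have hmem := hJ.1 j hj
  exact hK.dist_le_mul _ (Set.mem_image_of_mem f hmem.1) _ (Set.mem_image_of_mem f hmem.2)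

theorem le_mul_exp_integral_of_le_add_integral {a b c : ℝ} {y κ : ℝ → ℝ}
    (hκ : IntegrableOn κ (Set.Icc a b)) (hκ0 : ∀ s ∈ Set.Icc a b, 0 ≤ κ s)
    (hκy : IntegrableOn (fun s => κ s * y s) (Set.Icc a b))
    (hy : ∀ t ∈ Set.Icc a b, y t ≤ c + ∫ s in a..t, κ s * y s) {t : ℝ} (ht : t ∈ Set.Icc a b) :
    y t ≤ c * exp (∫ s in a..t, κ s) := by
  have hsub : Set.Icc a t ⊆ Set.Icc a b := Set.Icc_subset_Icc_right ht.2
  have hκ' : IntervalIntegrable κ volume a t :=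
    (intervalIntegrable_iff_integrableOn_Icc_of_le ht.1).2 (hκ.mono_set hsub)
  have hκy' : IntervalIntegrable (fun s => κ s * y s) volume a t :=
    (intervalIntegrable_iff_integrableOn_Icc_of_le ht.1).2 (hκy.mono_set hsub)
  set I : ℝ → ℝ := fun t => ∫ s in a..t, κ s
  set Z : ℝ → ℝ := fun t => c + ∫ s in a..t, κ s * y s
  have hWac : AbsolutelyContinuousOnInterval (fun s => Z s * exp (-I s)) a t := by
    have hI : AbsolutelyContinuousOnInterval I a t :=
      hκ'.absolutelyContinuousOnInterval_intervalIntegral Set.left_mem_uIcc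
    have hZac : AbsolutelyContinuousOnInterval Z a t :=
      (LipschitzWith.const c).lipschitzOnWith.absolutelyContinuousOnInterval.fun_add
        (hκy'.absolutelyContinuousOnInterval_intervalIntegral Set.left_mem_uIcc)
    exact hZac.fun_mul (absolutelyContinuousOnInterval_comp_of_locallyLipschitz
      contDiff_exp.locallyLipschitz hI.fun_neg)
  have hWderiv : ∀ᵐ s, s ∈ Set.Icc a t → deriv (fun s => Z s * exp (-I s)) s ≤ 0 := by
    filter_upwards [hκ'.ae_hasDerivAt_integral, hκy'.ae_hasDerivAt_integral] with s hIs hJs hs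
    rw [Set.uIcc_of_le ht.1] at hIs hJs
    have hmem : a ∈ Set.Icc a t := Set.left_mem_Icc.2 ht.1
    have hW : HasDerivAt (fun s => Z s * exp (-I s))
        (κ s * y s * exp (-I s) + Z s * (exp (-I s) * -κ s)) s :=
      ((hJs hs a hmem).const_add c).fun_mul (hIs hs a hmem).fun_neg.exp
    have hys : y s ≤ Z s := hy s (hsub hs)
    rw [hW.deriv]
    linarith [mul_nonneg (mul_nonneg (hκ0 s (hsub hs)) (exp_nonneg (-I s))) (sub_nonneg.2 hys)]
  have hW : Z t * exp (-I t) - Z a * exp (-I a) ≤ 0 := by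
    rw [← hWac.integral_deriv_eq_sub, intervalIntegral.integral_of_le ht.1]
    exact setIntegral_nonpos_ae measurableSet_Ioc
      (hWderiv.mono fun s hs hmem => hs (Set.Ioc_subset_Icc_self hmem))
  have hZt : Z t * exp (-I t) ≤ c := by simpa [Z, I] using hW
  rw [exp_neg, ← div_eq_mul_inv, div_le_iff₀ (exp_pos _)] at hZt
  exact (hy t ht).trans hZt

end Gronwall

section Translation

theorem tendsto_eLpNorm_sub_translate {E : Type*} [NormedAddCommGroup E] {p : ℝ≥0∞} (hp1 : 1 ≤ p)
    (hp : p ≠ ∞) {w : ℝ → E} (hw : MemLp w p volume) :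
    Tendsto (fun d : ℝ => eLpNorm (fun s => w s - w (s - d)) p volume) (nhds 0) (nhds 0) := by
  have : Fact (1 ≤ p) := ⟨hp1⟩
  have : Fact (p ≠ ∞) := ⟨hp⟩
  have hc : Continuous fun d : ℝ => DomAddAct.mk (-d) +ᵥ hw.toLp w :=
    (DomAddAct.continuous_mk.comp continuous_neg).vadd continuous_const
  have h0 := hc.tendsto 0
  rw [tendsto_iff_edist_tendsto_0] at h0
  refine h0.congr fun d => ?_
  rw [DomAddAct.mk_vadd_toLp, neg_zero, DomAddAct.mk_vadd_toLp, Lp.edist_toLp_toLp, ← eLpNorm_neg]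
  refine eLpNorm_congr_ae (ae_of_all _ fun s => ?_)
  simp [neg_add_eq_sub]

theorem tendsto_eLpNorm_top_sub_translate {E : Type*} [NormedAddCommGroup E] {Y : ℝ → E}
    (hY : UniformContinuous Y) :
    Tendsto (fun d : ℝ => eLpNorm (fun s => Y s - Y (s - d)) ∞ volume) (nhds 0) (nhds 0) := by
  rw [ENNReal.tendsto_nhds_zero]
  intro ε hε
  obtain ⟨δ, hδ, hYδ⟩ := EMetric.uniformContinuous_iff.1 hY ε hε
  filter_upwards [Metric.eball_mem_nhds 0 hδ] with d hd
  rw [eLpNorm_exponent_top]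
  refine eLpNormEssSup_le_of_ae_enorm_bound (ae_of_all _ fun s => ?_)
  rw [← edist_eq_enorm_sub]
  refine (hYδ ?_).le
  rwa [edist_eq_enorm_sub, sub_sub_cancel, ← edist_zero_right]

theorem tendsto_lintegral_enorm_mul_enorm_sub_translate {E : Type*} [NormedAddCommGroup E]
    {p q : ℝ≥0∞} [q.HolderConjugate p] {c : ℝ → ℝ} (hc : MemLp c q volume) {w : ℝ → E}
    (hw : AEStronglyMeasurable w volume)
    (hlim : Tendsto (fun d : ℝ => eLpNorm (fun s => w s - w (s - d)) p volume) (nhds 0) (nhds 0)) :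
    Tendsto (fun d : ℝ => ∫⁻ s, ‖c (s - d)‖ₑ * ‖w s - w (s - d)‖ₑ) (nhds 0) (nhds 0) := by
  have hlim' := ENNReal.Tendsto.const_mul hlim (Or.inr hc.2.ne)
  rw [mul_zero] at hlim'
  refine tendsto_of_tendsto_of_tendsto_of_le_of_le tendsto_const_nhds hlim'
    (fun _ => zero_le) fun d => ?_
  have hmp := measurePreserving_sub_right (volume : Measure ℝ) d
  have hholder := eLpNorm_smul_le_mul_eLpNorm (p := q) (q := p) (r := 1)
    (f := fun s => ‖w s - w (s - d)‖)
    (hw.sub (hw.comp_measurePreserving hmp)).norm (hc.1.comp_measurePreserving hmp)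
  rw [eLpNorm_one_eq_lintegral_enorm, eLpNorm_comp_measurePreserving hc.1 hmp,
    eLpNorm_norm] at hholder
  simpa only [Pi.smul_apply', smul_eq_mul, enorm_mul, Function.comp_apply, enorm_norm]
    using hholder

theorem lintegral_lintegral_Ioc_sub_eq {G : ℝ → ℝ → ℝ≥0∞}
    (hG : AEMeasurable (Function.uncurry G) (volume.prod volume)) (h : ℝ) :
    ∫⁻ s, ∫⁻ r in Set.Ioc (s - h) s, G s r = ∫⁻ d in Set.Ico 0 h, ∫⁻ s, G s (s - d) := by
  have hshear : MeasurePreserving (fun z : ℝ × ℝ => (z.1, z.1 + -z.2))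
      (volume.prod volume) (volume.prod volume) :=
    (measurePreserving_prod_add volume volume).comp
      ((MeasurePreserving.id volume).prod (Measure.measurePreserving_neg volume))
  rw [← lintegral_lintegral_swap]
  · refine lintegral_congr fun s => ?_
    have := (Measure.measurePreserving_sub_left volume s).setLIntegral_comp_preimage_emb
      (MeasurableEquiv.subLeft s).measurableEmbedding (fun d => G s (s - d)) (Set.Ico 0 h)
    simpa only [sub_sub_cancel, Set.preimage_const_sub_Ico, sub_zero] using this
  · exact (hG.comp_quasiMeasurePreserving hshear.quasiMeasurePreserving).mono_ac
      (Measure.AbsolutelyContinuous.rfl.prod Measure.absolutelyContinuous_restrict)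

theorem eventually_lintegral_lintegral_Ioc_sub_le {G : ℝ → ℝ → ℝ≥0∞}
    (hG : AEMeasurable (Function.uncurry G) (volume.prod volume))
    (hlim : Tendsto (fun d => ∫⁻ s, G s (s - d)) (nhds 0) (nhds 0)) {ε : ℝ} (hε : 0 < ε) :
    ∀ᶠ h in nhdsWithin 0 (Set.Ioi 0),
      ∫⁻ s, ∫⁻ r in Set.Ioc (s - h) s, G s r ≤ ENNReal.ofReal (ε * h) := by
  obtain ⟨δ, hδ, hball⟩ := Metric.eventually_nhds_iff.1
    (hlim.eventually_lt_const (ENNReal.ofReal_pos.2 hε))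
  filter_upwards [Ioo_mem_nhdsGT hδ] with h hh
  calc ∫⁻ s, ∫⁻ r in Set.Ioc (s - h) s, G s r
      = ∫⁻ d in Set.Ico 0 h, ∫⁻ s, G s (s - d) := lintegral_lintegral_Ioc_sub_eq hG h
    _ ≤ ∫⁻ _ in Set.Ico 0 h, ENNReal.ofReal ε := by
        refine setLIntegral_mono' measurableSet_Ico fun d hd => (hball ?_).le
        rw [dist_zero_right, norm_of_nonneg hd.1]
        exact hd.2.trans hh.2
    _ = ENNReal.ofReal (ε * h) := by
        rw [setLIntegral_const, volume_Ico, sub_zero, ENNReal.ofReal_mul hε.le]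

theorem eventually_lintegral_modulus_le {E F : Type*} [NormedAddCommGroup E]
    [NormedAddCommGroup F] {p q : ℝ≥0∞} [q.HolderConjugate p] (hp : p ≠ ∞) {c k : ℝ → ℝ}
    {w : ℝ → E} {Y : ℝ → F} (hc : MemLp c q volume) (hk : Integrable k)
    (hw : MemLp w p volume) (hY : UniformContinuous Y) {ε : ℝ} (hε : 0 < ε) :
    ∀ᶠ h in nhdsWithin 0 (Set.Ioi 0), ∫⁻ s, ∫⁻ r in Set.Ioc (s - h) s,
      (‖c r‖ₑ * ‖w s - w r‖ₑ + ‖k r‖ₑ * ‖Y s - Y r‖ₑ) ≤ ENNReal.ofReal (ε * h) := by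
  have hk' : MemLp k 1 volume := memLp_one_iff_integrable.2 hk
  have hp1 : 1 ≤ p := by
    have := ENNReal.HolderConjugate.symm (p := q) (q := p)
    exact ENNReal.HolderConjugate.one_le p q
  have hYm : AEStronglyMeasurable Y volume := hY.continuous.aestronglyMeasurable
  have hwm : AEStronglyMeasurable (fun z : ℝ × ℝ => w z.1 - w z.2) (volume.prod volume) :=
    hw.1.comp_fst.sub hw.1.comp_snd
  have hYm' : AEStronglyMeasurable (fun z : ℝ × ℝ => Y z.1 - Y z.2) (volume.prod volume) :=
    hYm.comp_fst.sub hYm.comp_snd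
  refine eventually_lintegral_lintegral_Ioc_sub_le
    (G := fun s r => ‖c r‖ₑ * ‖w s - w r‖ₑ + ‖k r‖ₑ * ‖Y s - Y r‖ₑ)
    ((hc.1.comp_snd.enorm.mul hwm.enorm).add (hk'.1.comp_snd.enorm.mul hYm'.enorm)) ?_ hε
  have hwlim := tendsto_lintegral_enorm_mul_enorm_sub_translate hc hw.1
    (tendsto_eLpNorm_sub_translate hp1 hp hw)
  have hYlim := tendsto_lintegral_enorm_mul_enorm_sub_translate hk' hYm
    (tendsto_eLpNorm_top_sub_translate hY)
  have hlim := hwlim.add hYlim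
  rw [add_zero] at hlim
  refine hlim.congr fun d => (lintegral_add_left' ?_ _).symm
  have hmp := measurePreserving_sub_right (volume : Measure ℝ) d
  exact (hc.1.comp_measurePreserving hmp).enorm.mul
    (hw.1.sub (hw.1.comp_measurePreserving hmp)).enorm

theorem le_of_eventually_lintegral_sub_translate_le {ζ : ℝ → ℝ} (hζ : Continuous ζ) {a b : ℝ}
    (hab : a ≤ b)
    (hinc : ∀ ε > 0, ∀ᶠ h in nhdsWithin 0 (Set.Ioi 0),
      ∫⁻ s in Set.Ioc (a + h) b, ENNReal.ofReal (ζ s - ζ (s - h)) ≤ ENNReal.ofReal (ε * h)) :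
    ζ b ≤ ζ a := by
  rcases hab.eq_or_lt with rfl | hab
  · rfl
  set P : ℝ → ℝ := fun τ => ∫ s in 0..τ, ζ s
  have hP (τ : ℝ) : HasDerivAt P (ζ τ) τ := (hζ.integral_hasStrictDerivAt 0 τ).hasDerivAt
  have hint (c d : ℝ) : IntervalIntegrable ζ volume c d := hζ.intervalIntegrable c d
  set R : ℝ → ℝ := fun h => P (a + h) + P (b - h) - P a - P b
  have hR : HasDerivAt R (ζ a - ζ b) 0 := by
    have hPa : HasDerivAt (fun h => P (a + h)) (ζ a) 0 := by
      simpa using (hP (a + 0)).comp_const_add a 0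
    have hPb : HasDerivAt (fun h => P (b - h)) (-ζ b) 0 := by
      simpa using (hP (b - 0)).comp_const_sub b 0
    simpa [R, sub_eq_add_neg] using ((hPa.add hPb).sub_const (P a)).sub_const (P b)
  refine le_of_forall_pos_le_add fun ε hε => ?_
  suffices -ε ≤ ζ a - ζ b by linarith
  refine ge_of_tendsto hR.tendsto_slope_zero_right ?_
  filter_upwards [hinc ε hε, Ioo_mem_nhdsGT (sub_pos.2 hab)] with h hle hh
  have hshift : IntervalIntegrable (fun s => ζ (s - h)) volume (a + h) b :=
    (hζ.comp (continuous_sub_right h)).intervalIntegrable _ _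
  have htelescope : ∫ s in a + h..b, (ζ s - ζ (s - h)) = -R h := by
    rw [intervalIntegral.integral_sub (hint _ _) hshift,
      intervalIntegral.integral_comp_sub_right ζ h, add_sub_cancel_right,
      ← intervalIntegral.integral_interval_sub_left (hint 0 b) (hint 0 (a + h)),
      ← intervalIntegral.integral_interval_sub_left (hint 0 (b - h)) (hint 0 a)]
    simp only [R, P]
    ring
  have hRh : -R h ≤ ε * h := by
    rw [← htelescope, intervalIntegral.integral_of_le (by linarith [hh.2]),
      integral_eq_lintegral_pos_part_sub_lintegral_neg_part ((hint _ _).sub hshift).1]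
    exact (sub_le_self _ ENNReal.toReal_nonneg).trans
      (ENNReal.toReal_le_of_le_ofReal (mul_nonneg hε.le hh.1.le) hle)
  have hR0 : R 0 = 0 := by simp [R]
  rw [zero_add, hR0, sub_zero, smul_eq_mul, ← div_eq_inv_mul, le_div_iff₀ hh.1]
  linarith

end Translation

section Energy

variable {V H : Type*} [NormedAddCommGroup V] [NormedSpace ℝ V]
  [NormedAddCommGroup H] [InnerProductSpace ℝ H] {i : V →L[ℝ] H} {p q : ℝ≥0∞}

/-- `Y` has the weak derivative `Λ` on `[a, b]`: the increments of `Y`, tested with the image of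
`v` in `H`, are the integrals of `Λ · v`. In the Gelfand triple `V ⊂ H ⊂ V*` this says `Y' = Λ`
in `V*`. -/
def HasWeakDerivOn (i : V →L[ℝ] H) (Y : ℝ → H) (Λ : ℝ → V → ℝ) (a b : ℝ) : Prop :=
  ∀ s ∈ Set.Icc a b, ∀ t ∈ Set.Icc a b, ∀ v, ⟪Y t - Y s, i v⟫ = ∫ r in s..t, Λ r v

theorem intervalIntegrable_of_integrableOn_Icc {E : Type*} [NormedAddCommGroup E] {φ : ℝ → E}
    {a b s t : ℝ} (hφ : IntegrableOn φ (Set.Icc a b)) (hs : s ∈ Set.Icc a b)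
    (ht : t ∈ Set.Icc a b) : IntervalIntegrable φ volume s t :=
  intervalIntegrable_iff.2
    (hφ.mono_set (Set.uIoc_subset_uIcc.trans (Set.uIcc_subset_Icc hs ht)))

theorem HasWeakDerivOn.sub {Y₁ Y₂ : ℝ → H} {Λ₁ Λ₂ : ℝ → V → ℝ} {a b : ℝ}
    (h₁ : HasWeakDerivOn i Y₁ Λ₁ a b) (h₂ : HasWeakDerivOn i Y₂ Λ₂ a b)
    (hΛ₁ : ∀ v, IntegrableOn (Λ₁ · v) (Set.Icc a b))
    (hΛ₂ : ∀ v, IntegrableOn (Λ₂ · v) (Set.Icc a b)) :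
    HasWeakDerivOn i (Y₁ - Y₂) (Λ₁ - Λ₂) a b := by
  intro s hs t ht v
  simp only [Pi.sub_apply]
  rw [intervalIntegral.integral_sub (intervalIntegrable_of_integrableOn_Icc (hΛ₁ v) hs ht)
    (intervalIntegrable_of_integrableOn_Icc (hΛ₂ v) hs ht), ← h₁ s hs t ht v, ← h₂ s hs t ht v,
    ← inner_sub_left, sub_sub_sub_comm]

section Form

variable {S : Type*} [MeasurableSpace S] [MeasurableSpace V] {μ : Measure S}
  {Λ Λ₁ Λ₂ : S → V → ℝ} {c k c₁ k₁ c₂ k₂ : S → ℝ} {w : S → V}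

/-- A jointly measurable family of functionals on `V`, almost all of them Lipschitz with an `L^q`
coefficient `c` for the norm of `V` and an integrable coefficient `k` for the norm of `H`. The
values `Λ s` are not asked to be linear because integral formulas for them are so only for almost
every `s`. -/
structure IsDominatedForm (i : V →L[ℝ] H) (q : ℝ≥0∞) (μ : Measure S) (Λ : S → V → ℝ)
    (c k : S → ℝ) : Prop where
  measurable : Measurable (Function.uncurry Λ)
  memLp : MemLp c q μ
  integrable : Integrable k μ
  map_zero : ∀ s, Λ s 0 = 0
  abs_sub_le : ∀ᵐ s ∂μ, ∀ v v', |Λ s v - Λ s v'| ≤ c s * ‖v - v'‖ + k s * ‖i v - i v'‖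

namespace IsDominatedForm

theorem add (h₁ : IsDominatedForm i q μ Λ₁ c₁ k₁) (h₂ : IsDominatedForm i q μ Λ₂ c₂ k₂) :
    IsDominatedForm i q μ (Λ₁ + Λ₂) (c₁ + c₂) (k₁ + k₂) where
  measurable := h₁.measurable.add h₂.measurable
  memLp := h₁.memLp.add h₂.memLp
  integrable := h₁.integrable.add h₂.integrable
  map_zero s := by simp [h₁.map_zero, h₂.map_zero]
  abs_sub_le := by
    filter_upwards [h₁.abs_sub_le, h₂.abs_sub_le] with s hs₁ hs₂ v v'
    simp only [Pi.add_apply]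
    rw [add_sub_add_comm]
    calc |(Λ₁ s v - Λ₁ s v') + (Λ₂ s v - Λ₂ s v')|
        ≤ (c₁ s * ‖v - v'‖ + k₁ s * ‖i v - i v'‖) + (c₂ s * ‖v - v'‖ + k₂ s * ‖i v - i v'‖) :=
          (abs_add_le _ _).trans (add_le_add (hs₁ v v') (hs₂ v v'))
      _ = (c₁ s + c₂ s) * ‖v - v'‖ + (k₁ s + k₂ s) * ‖i v - i v'‖ := by ring

theorem neg (hΛ : IsDominatedForm i q μ Λ c k) : IsDominatedForm i q μ (-Λ) c k where
  measurable := hΛ.measurable.neg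
  memLp := hΛ.memLp
  integrable := hΛ.integrable
  map_zero s := by simp [hΛ.map_zero]
  abs_sub_le := hΛ.abs_sub_le.mono fun s hs v v' => by
    simp only [Pi.neg_apply]
    rw [neg_sub_neg, abs_sub_comm]
    exact hs v v'

theorem sub (h₁ : IsDominatedForm i q μ Λ₁ c₁ k₁) (h₂ : IsDominatedForm i q μ Λ₂ c₂ k₂) :
    IsDominatedForm i q μ (Λ₁ - Λ₂) (c₁ + c₂) (k₁ + k₂) :=
  sub_eq_add_neg Λ₁ Λ₂ ▸ h₁.add h₂.neg

variable [BorelSpace V]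

theorem integrable_comp [q.HolderConjugate p] (hΛ : IsDominatedForm i q μ Λ c k)
    (hw : MemLp w p μ) (hiw : MemLp (fun s => i (w s)) ∞ μ) :
    Integrable (fun s => Λ s (w s)) μ := by
  have hk : MemLp k 1 μ := memLp_one_iff_integrable.2 hΛ.integrable
  refine ((hΛ.memLp.integrable_mul hw.norm).add (hk.integrable_mul hiw.norm)).mono'
    (hΛ.measurable.comp_aemeasurable
      (aemeasurable_id.prodMk hw.1.aemeasurable)).aestronglyMeasurable ?_
  filter_upwards [hΛ.abs_sub_le] with s hs
  simpa [hΛ.map_zero] using hs (w s) 0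

theorem integrable_apply [IsFiniteMeasure μ] (hq : 1 ≤ q) (hΛ : IsDominatedForm i q μ Λ c k)
    (v : V) : Integrable (fun s => Λ s v) μ := by
  have : q.HolderConjugate (ENNReal.conjExponent q) := .conjExponent hq
  exact hΛ.integrable_comp (p := ENNReal.conjExponent q) (memLp_const v) (memLp_const (i v))

end IsDominatedForm

end Form

section Path

variable {Y : ℝ → H} {Λ : ℝ → V → ℝ} {w : ℝ → V} {a b : ℝ}

theorem HasWeakDerivOn.ofReal_norm_sq_sub_le (hweak : HasWeakDerivOn i Y Λ a b) {r s : ℝ}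
    (hr : r ∈ Set.Icc a b) (hs : s ∈ Set.Icc a b) (hrs : r ≤ s) (hws : i (w s) = Y s)
    (hΛs : IntervalIntegrable (Λ · (w s)) volume r s)
    (hΛw : IntervalIntegrable (fun τ => Λ τ (w τ)) volume r s) :
    ENNReal.ofReal (‖Y s‖ ^ 2 - ‖Y r‖ ^ 2 - 2 * ∫ τ in r..s, Λ τ (w τ))
      ≤ 2 * ∫⁻ τ in Set.Ioc r s, ‖Λ τ (w s) - Λ τ (w τ)‖ₑ := by
  have hexpand : ‖Y s‖ ^ 2 - ‖Y r‖ ^ 2 ≤ 2 * ⟪Y s - Y r, Y s⟫ := by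
    have := norm_sub_sq_real (Y s) (Y r)
    rw [inner_sub_left, real_inner_self_eq_norm_sq, real_inner_comm]
    linarith [sq_nonneg ‖Y s - Y r‖]
  have hle : ‖Y s‖ ^ 2 - ‖Y r‖ ^ 2 - 2 * ∫ τ in r..s, Λ τ (w τ)
      ≤ 2 * ∫ τ in Set.Ioc r s, (Λ τ (w s) - Λ τ (w τ)) := by
    rw [← intervalIntegral.integral_of_le hrs, intervalIntegral.integral_sub hΛs hΛw,
      ← hweak r hr s hs (w s), hws]
    linarith
  calc _ ≤ ENNReal.ofReal (2 * ∫ τ in Set.Ioc r s, (Λ τ (w s) - Λ τ (w τ))) :=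
        ENNReal.ofReal_le_ofReal hle
    _ = 2 * ENNReal.ofReal (∫ τ in Set.Ioc r s, (Λ τ (w s) - Λ τ (w τ))) := by
        rw [ENNReal.ofReal_mul zero_le_two, ENNReal.ofReal_ofNat]
    _ ≤ _ := by
        gcongr
        exact (ofReal_le_enorm _).trans (enorm_integral_le_lintegral_enorm _)

theorem memLp_top_comp_of_ae_eq (hwY : ∀ᵐ s ∂(volume.restrict (Set.Icc a b)), i (w s) = Y s)
    (hY : ContinuousOn Y (Set.Icc a b)) :
    MemLp (fun s => i (w s)) ∞ (volume.restrict (Set.Icc a b)) := by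
  obtain ⟨M, hM⟩ := isCompact_Icc.exists_bound_of_continuousOn hY
  have hYM : MemLp Y ∞ (volume.restrict (Set.Icc a b)) :=
    memLp_top_of_bound (hY.aestronglyMeasurable measurableSet_Icc) M
      ((ae_restrict_mem measurableSet_Icc).mono hM)
  exact hYM.ae_eq (EventuallyEq.symm hwY)

variable [MeasurableSpace V] {c k : ℝ → ℝ}

namespace IsDominatedForm

theorem lintegral_enorm_sub_le (hΛ : IsDominatedForm i q (volume.restrict (Set.Icc a b)) Λ c k)
    (hwY : ∀ᵐ s ∂(volume.restrict (Set.Icc a b)), i (w s) = Y s) {r s : ℝ}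
    (hr : a ≤ r) (hs : s ≤ b) (hws : i (w s) = Y s) :
    ∫⁻ τ in Set.Ioc r s, ‖Λ τ (w s) - Λ τ (w τ)‖ₑ ≤
      ∫⁻ τ in Set.Ioc r s, (‖c τ‖ₑ * ‖w s - w τ‖ₑ + ‖k τ‖ₑ * ‖Y s - Y τ‖ₑ) := by
  have hsub : Set.Ioc r s ⊆ Set.Icc a b := fun τ hτ => ⟨hr.trans hτ.1.le, hτ.2.trans hs⟩
  refine lintegral_mono_ae ?_
  filter_upwards [ae_restrict_of_ae_restrict_of_subset hsub hΛ.abs_sub_le,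
    ae_restrict_of_ae_restrict_of_subset hsub hwY] with τ hτ hwτ
  rw [← hws, ← hwτ, ← enorm_norm (w s - w τ), ← enorm_norm (i (w s) - i (w τ)), ← enorm_mul,
    ← enorm_mul]
  refine (enorm_le_iff_norm_le.2 ?_).trans (enorm_add_le _ _)
  exact (hτ _ _).trans (le_abs_self _)

variable [BorelSpace V]

theorem eventually_lintegral_energy_le [q.HolderConjugate p] (hp : p ≠ ∞)
    (hΛ : IsDominatedForm i q (volume.restrict (Set.Icc a b)) Λ c k)
    (hw : MemLp w p (volume.restrict (Set.Icc a b))) (hY : UniformContinuous Y)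
    (hwY : ∀ᵐ s ∂(volume.restrict (Set.Icc a b)), i (w s) = Y s)
    (hweak : HasWeakDerivOn i Y Λ a b) {ε : ℝ} (hε : 0 < ε) :
    ∀ᶠ h in nhdsWithin 0 (Set.Ioi 0), ∫⁻ s in Set.Ioc (a + h) b,
      ENNReal.ofReal (‖Y s‖ ^ 2 - ‖Y (s - h)‖ ^ 2 - 2 * ∫ r in s - h..s, Λ r (w r)) ≤
        ENNReal.ofReal (ε * h) := by
  have hq : 1 ≤ q := ENNReal.HolderConjugate.one_le q p
  have hΛw : IntegrableOn (fun s => Λ s (w s)) (Set.Icc a b) :=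
    hΛ.integrable_comp hw (memLp_top_comp_of_ae_eq hwY hY.continuous.continuousOn)
  have hk : IntegrableOn k (Set.Icc a b) := hΛ.integrable
  set c' : ℝ → ℝ := (Set.Icc a b).indicator c
  set k' : ℝ → ℝ := (Set.Icc a b).indicator k
  set w' : ℝ → V := (Set.Icc a b).indicator w
  filter_upwards [self_mem_nhdsWithin, eventually_lintegral_modulus_le hp
    ((memLp_indicator_iff_restrict measurableSet_Icc).2 hΛ.memLp : MemLp c' q volume)
    (hk.integrable_indicator measurableSet_Icc : Integrable k')
    ((memLp_indicator_iff_restrict measurableSet_Icc).2 hw : MemLp w' p volume) hY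
    (half_pos hε)] with h hh hmod
  have hh : 0 < h := hh
  have hmem {s r : ℝ} (hs : s ∈ Set.Ioc (a + h) b) (hr : r ∈ Set.Icc (s - h) s) :
      r ∈ Set.Icc a b := ⟨by linarith [hs.1, hr.1], hr.2.trans hs.2⟩
  have hpt : ∀ᵐ s ∂(volume.restrict (Set.Ioc (a + h) b)),
      ENNReal.ofReal (‖Y s‖ ^ 2 - ‖Y (s - h)‖ ^ 2 - 2 * ∫ r in s - h..s, Λ r (w r)) ≤
        2 * ∫⁻ r in Set.Ioc (s - h) s, (‖c' r‖ₑ * ‖w' s - w' r‖ₑ + ‖k' r‖ₑ * ‖Y s - Y r‖ₑ) := by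
    have hsub : Set.Ioc (a + h) b ⊆ Set.Icc a b := fun s hs =>
      hmem hs (Set.right_mem_Icc.2 (by linarith))
    filter_upwards [ae_restrict_mem measurableSet_Ioc,
      ae_restrict_of_ae_restrict_of_subset hsub hwY] with s hs hws
    have hle : s - h ≤ s := by linarith
    have hr := hmem hs (Set.left_mem_Icc.2 hle)
    refine (hweak.ofReal_norm_sq_sub_le hr (hsub hs) hle hws
      (intervalIntegrable_of_integrableOn_Icc (hΛ.integrable_apply hq _) hr (hsub hs))
      (intervalIntegrable_of_integrableOn_Icc hΛw hr (hsub hs))).trans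
      (mul_le_mul_right ((hΛ.lintegral_enorm_sub_le hwY hr.1 hs.2 hws).trans_eq ?_) 2)
    refine setLIntegral_congr_fun measurableSet_Ioc fun r hr => ?_
    simp only [c', k', w', Set.indicator_of_mem (hmem hs (Set.Ioc_subset_Icc_self hr)),
      Set.indicator_of_mem (hsub hs)]
  calc _ ≤ 2 * ∫⁻ s in Set.Ioc (a + h) b, ∫⁻ r in Set.Ioc (s - h) s,
        (‖c' r‖ₑ * ‖w' s - w' r‖ₑ + ‖k' r‖ₑ * ‖Y s - Y r‖ₑ) :=
        (lintegral_mono_ae hpt).trans_eq (lintegral_const_mul' _ _ ENNReal.ofNat_ne_top)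
    _ ≤ 2 * ENNReal.ofReal (ε / 2 * h) :=
        mul_le_mul_right ((setLIntegral_le_lintegral _ _).trans hmod) 2
    _ = ENNReal.ofReal (ε * h) := by
        rw [← ENNReal.ofReal_ofNat 2, ← ENNReal.ofReal_mul zero_le_two]
        ring_nf

theorem norm_sq_le_add_integral_of_uniformContinuous [q.HolderConjugate p] (hp : p ≠ ∞)
    (hΛ : IsDominatedForm i q (volume.restrict (Set.Icc a b)) Λ c k)
    (hw : MemLp w p (volume.restrict (Set.Icc a b))) (hY : UniformContinuous Y)
    (hwY : ∀ᵐ s ∂(volume.restrict (Set.Icc a b)), i (w s) = Y s)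
    (hweak : HasWeakDerivOn i Y Λ a b) {t : ℝ} (ht : t ∈ Set.Icc a b) :
    ‖Y t‖ ^ 2 ≤ ‖Y a‖ ^ 2 + 2 * ∫ s in a..t, Λ s (w s) := by
  have hΛw : IntegrableOn (fun s => Λ s (w s)) (Set.Icc a b) :=
    hΛ.integrable_comp hw (memLp_top_comp_of_ae_eq hwY hY.continuous.continuousOn)
  set Q : ℝ → ℝ := (Set.Icc a b).indicator fun s => Λ s (w s)
  have hQ : Integrable Q := (integrable_indicator_iff measurableSet_Icc).2 hΛw
  have hQint (s r : ℝ) : IntervalIntegrable Q volume s r := hQ.intervalIntegrable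
  have hΦ {s r : ℝ} (hs : s ∈ Set.Icc a b) (hr : r ∈ Set.Icc a b) :
      ∫ τ in s..r, Λ τ (w τ) = ∫ τ in s..r, Q τ :=
    intervalIntegral.integral_congr fun τ hτ =>
      (Set.indicator_of_mem (Set.uIcc_subset_Icc hs hr hτ) fun s => Λ s (w s)).symm
  set ζ : ℝ → ℝ := fun τ => ‖Y τ‖ ^ 2 - 2 * ∫ r in a..τ, Q r
  have hζ : Continuous ζ :=
    (hY.continuous.norm.pow 2).sub ((intervalIntegral.continuous_primitive hQint a).const_mul 2)
  have ha : a ∈ Set.Icc a b := ⟨le_rfl, ht.1.trans ht.2⟩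
  suffices ζ t ≤ ζ a by
    rw [hΦ ha ht]
    simpa [ζ] using this
  refine le_of_eventually_lintegral_sub_translate_le hζ ht.1 fun ε hε => ?_
  filter_upwards [hΛ.eventually_lintegral_energy_le hp hw hY hwY hweak hε,
    self_mem_nhdsWithin] with h hle hh
  refine ((setLIntegral_congr_fun measurableSet_Ioc fun s hs => ?_).trans_le
    (lintegral_mono_set (Set.Ioc_subset_Ioc_right ht.2))).trans hle
  have hh : 0 < h := hh
  have hsub : s - h ∈ Set.Icc a b := ⟨by linarith [hs.1], by linarith [hs.2, ht.2]⟩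
  have hs' : s ∈ Set.Icc a b := ⟨by linarith [hs.1], hs.2.trans ht.2⟩
  rw [hΦ hsub hs', ← intervalIntegral.integral_interval_sub_left (hQint a s) (hQint a (s - h))]
  simp only [ζ]
  ring_nf

theorem norm_sq_le_add_integral [q.HolderConjugate p] (hp : p ≠ ∞)
    (hΛ : IsDominatedForm i q (volume.restrict (Set.Icc a b)) Λ c k)
    (hw : MemLp w p (volume.restrict (Set.Icc a b))) (hY : ContinuousOn Y (Set.Icc a b))
    (hwY : ∀ᵐ s ∂(volume.restrict (Set.Icc a b)), i (w s) = Y s)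
    (hweak : HasWeakDerivOn i Y Λ a b) {t : ℝ} (ht : t ∈ Set.Icc a b) :
    ‖Y t‖ ^ 2 ≤ ‖Y a‖ ^ 2 + 2 * ∫ s in a..t, Λ s (w s) := by
  have hab : a ≤ b := ht.1.trans ht.2
  set Z : ℝ → H := fun s => Y (Set.projIcc a b hab s)
  have hZY {s : ℝ} (hs : s ∈ Set.Icc a b) : Z s = Y s := by
    simp only [Z, Set.projIcc_of_mem hab hs]
  have hZ : UniformContinuous Z :=
    (CompactSpace.uniformContinuous_of_continuous
      (continuousOn_iff_continuous_domRestrict.1 hY)).comp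
      (LipschitzWith.projIcc hab).uniformContinuous
  rw [← hZY ht, ← hZY (Set.left_mem_Icc.2 hab)]
  refine hΛ.norm_sq_le_add_integral_of_uniformContinuous hp hw hZ ?_ (fun s hs r hr v => ?_) ht
  · filter_upwards [hwY, ae_restrict_mem measurableSet_Icc] with s hs hmem
    rw [hs, hZY hmem]
  · rw [hZY hs, hZY hr, hweak s hs r hr v]

theorem norm_sq_le_mul_exp_integral [q.HolderConjugate p] (hp : p ≠ ∞)
    (hΛ : IsDominatedForm i q (volume.restrict (Set.Icc a b)) Λ c k)
    (hw : MemLp w p (volume.restrict (Set.Icc a b))) (hY : ContinuousOn Y (Set.Icc a b))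
    (hwY : ∀ᵐ s ∂(volume.restrict (Set.Icc a b)), i (w s) = Y s)
    (hweak : HasWeakDerivOn i Y Λ a b) {κ : ℝ → ℝ} (hκ : IntegrableOn κ (Set.Icc a b))
    (hκ0 : ∀ s ∈ Set.Icc a b, 0 ≤ κ s)
    (hmono : ∀ᵐ s ∂(volume.restrict (Set.Icc a b)), 2 * Λ s (w s) ≤ κ s * ‖i (w s)‖ ^ 2)
    {t : ℝ} (ht : t ∈ Set.Icc a b) : ‖Y t‖ ^ 2 ≤ ‖Y a‖ ^ 2 * exp (∫ s in a..t, κ s) := by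
  have hκY : IntegrableOn (fun s => κ s * ‖Y s‖ ^ 2) (Set.Icc a b) :=
    hκ.mul_continuousOn (hY.norm.pow 2) isCompact_Icc
  have hΛw : IntegrableOn (fun s => Λ s (w s)) (Set.Icc a b) :=
    hΛ.integrable_comp hw (memLp_top_comp_of_ae_eq hwY hY)
  refine le_mul_exp_integral_of_le_add_integral hκ hκ0 hκY (fun r hr => ?_) ht
  have hsub : Set.Icc a r ⊆ Set.Icc a b := Set.Icc_subset_Icc_right hr.2
  have ha : a ∈ Set.Icc a b := ⟨le_rfl, hr.1.trans hr.2⟩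
  refine (hΛ.norm_sq_le_add_integral hp hw hY hwY hweak hr).trans ?_
  rw [← intervalIntegral.integral_const_mul]
  gcongr
  refine intervalIntegral.integral_mono_ae_restrict hr.1
    ((intervalIntegrable_of_integrableOn_Icc hΛw ha hr).const_mul 2)
    (intervalIntegrable_of_integrableOn_Icc hκY ha hr) ?_
  filter_upwards [ae_restrict_of_ae_restrict_of_subset hsub hmono,
    ae_restrict_of_ae_restrict_of_subset hsub hwY] with s hs hws
  rwa [← hws]

theorem eq_zero_of_two_mul_le [q.HolderConjugate p] (hp : p ≠ ∞)
    (hΛ : IsDominatedForm i q (volume.restrict (Set.Icc a b)) Λ c k)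
    (hw : MemLp w p (volume.restrict (Set.Icc a b))) (hY : ContinuousOn Y (Set.Icc a b))
    (hwY : ∀ᵐ s ∂(volume.restrict (Set.Icc a b)), i (w s) = Y s)
    (hweak : HasWeakDerivOn i Y Λ a b) (hYa : Y a = 0) {κ : ℝ → ℝ}
    (hκ : IntegrableOn κ (Set.Icc a b))
    (hmono : ∀ᵐ s ∂(volume.restrict (Set.Icc a b)), 2 * Λ s (w s) ≤ κ s * ‖i (w s)‖ ^ 2)
    {t : ℝ} (ht : t ∈ Set.Icc a b) : Y t = 0 := by
  have hYt := hΛ.norm_sq_le_mul_exp_integral hp hw hY hwY hweak hκ.abs (fun s _ => abs_nonneg _)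
    (hmono.mono fun s hs => hs.trans (mul_le_mul_of_nonneg_right (le_abs_self _) (sq_nonneg _))) ht
  rw [hYa, norm_zero, zero_pow two_ne_zero, zero_mul] at hYt
  exact norm_eq_zero.1 (pow_eq_zero_iff two_ne_zero |>.1 (hYt.antisymm (sq_nonneg _)))

end IsDominatedForm

end Path

end Energy

section Integrability

variable {S : Type*} [MeasurableSpace S] {μ : Measure S}

theorem exists_memLp_ge_of_rpow_le {N φ : S → ℝ} {r : ℝ} (hr : 0 < r) (hN : ∀ s, 0 ≤ N s)
    (hφ : Integrable φ μ) (hle : ∀ᵐ s ∂μ, N s ^ r ≤ φ s) :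
    ∃ c, MemLp c (ENNReal.ofReal r) μ ∧ ∀ᵐ s ∂μ, N s ≤ c s := by
  refine ⟨fun s => |φ s| ^ r⁻¹, ?_, hle.mono fun s hs =>
    (Real.le_rpow_inv_iff_of_pos (hN s) (abs_nonneg _) hr).2 (hs.trans (le_abs_self _))⟩
  rw [← integrable_norm_rpow_iff (hφ.abs.1.aemeasurable.pow_const _).aestronglyMeasurable
    (by simpa using hr) ENNReal.ofReal_ne_top, ENNReal.toReal_ofReal hr.le]
  refine hφ.abs.congr (ae_of_all _ fun s => ?_)
  simp only
  rw [Real.norm_of_nonneg (by positivity), Real.rpow_inv_rpow (abs_nonneg _) hr.ne']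

theorem integrable_mul_one_add_norm_rpow {E : Type*} [NormedAddCommGroup E] {φ : S → ℝ}
    {w : S → E} {β : ℝ} (hφ : Integrable φ μ) (hw : MemLp w ∞ μ) (hβ : 0 ≤ β) :
    Integrable (fun s => φ s * (1 + ‖w s‖ ^ β)) μ := by
  have hwβ : MemLp (fun s => ‖w s‖ ^ β) ∞ μ := by
    simpa only [ENNReal.toReal_ofReal hβ, ENNReal.top_div_of_ne_top ENNReal.ofReal_ne_top]
      using hw.norm_rpow_div (ENNReal.ofReal β)
  exact (memLp_one_iff_integrable.2 hφ).integrable_mul ((memLp_top_const (1 : ℝ)).add hwβ)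

variable {𝕏 H : Type*} [NormedAddCommGroup H] [InnerProductSpace ℝ H]

theorem norm_inner_mul_le {D h : H} {ℓ m c : ℝ} (hD : ‖D‖ ≤ ℓ * c) :
    ‖⟪D, h⟫ * m‖ ≤ ℓ * |m| * c * ‖h‖ := by
  rw [norm_mul, Real.norm_eq_abs m]
  calc ‖⟪D, h⟫‖ * |m| ≤ ℓ * c * ‖h‖ * |m| := by
        gcongr
        exact (norm_inner_le_norm D h).trans (mul_le_mul_of_nonneg_right hD (norm_nonneg h))
    _ = ℓ * |m| * c * ‖h‖ := by ring

variable [MeasurableSpace 𝕏] {ν : Measure 𝕏} {D : 𝕏 → H} {ℓ m : 𝕏 → ℝ} {c : ℝ}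

theorem integrable_inner_mul (hD : AEStronglyMeasurable D ν) (hm : AEStronglyMeasurable m ν)
    (hℓ : Integrable (fun z => ℓ z * |m z|) ν) (hle : ∀ z, ‖D z‖ ≤ ℓ z * c) (h : H) :
    Integrable (fun z => ⟪D z, h⟫ * m z) ν :=
  ((hℓ.mul_const c).mul_const ‖h‖).mono' ((hD.inner aestronglyMeasurable_const).mul hm)
    (ae_of_all _ fun z => norm_inner_mul_le (hle z))

theorem abs_integral_inner_mul_le (hℓ : Integrable (fun z => ℓ z * |m z|) ν)
    (hle : ∀ z, ‖D z‖ ≤ ℓ z * c) (h : H) :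
    |∫ z, ⟪D z, h⟫ * m z ∂ν| ≤ (∫ z, ℓ z * |m z| ∂ν) * c * ‖h‖ := by
  rw [← integral_mul_const, ← integral_mul_const]
  exact norm_integral_le_of_norm_le ((hℓ.mul_const c).mul_const ‖h‖)
    (ae_of_all _ fun z => norm_inner_mul_le (hle z))

end Integrability

section Skeleton

variable {V H : Type*} [NormedAddCommGroup V] [NormedSpace ℝ V] [NormedAddCommGroup H]
  [InnerProductSpace ℝ H] {i : V →L[ℝ] H}

section Form

variable {S : Type*} [MeasurableSpace S] {μ : Measure S} {q : ℝ≥0∞} {c : S → ℝ}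
  [MeasurableSpace V] [BorelSpace V]

namespace IsDominatedForm

theorem of_continuousLinearMap [TopologicalSpace.SeparableSpace V] {B : S → V →L[ℝ] ℝ}
    (hB : ∀ v, Measurable fun s => B s v) (hc : MemLp c q μ) (hle : ∀ᵐ s ∂μ, ‖B s‖ ≤ c s) :
    IsDominatedForm i q μ (fun s v => B s v) c 0 where
  measurable := (measurable_uncurry_of_continuous_of_measurable (u := fun v s => B s v)
    (fun s => (B s).continuous) hB).comp measurable_swap
  memLp := hc
  integrable := integrable_zero _ _ _
  map_zero s := (B s).map_zero
  abs_sub_le := hle.mono fun s hs v v' => by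
    simpa using (B s).le_of_opNorm_le hs (v - v')

theorem integral_inner {𝕏 : Type*} [MeasurableSpace 𝕏] [TopologicalSpace.SeparableSpace H]
    [MeasurableSpace H] [BorelSpace H] [SFinite μ] {ν : Measure 𝕏} [SFinite ν]
    {D : S → 𝕏 → H} {ℓ m : S × 𝕏 → ℝ} (hD : Measurable (Function.uncurry D)) (hm : Measurable m)
    (hℓ : Integrable (fun q => ℓ q * |m q|) (μ.prod ν))
    (hle : ∀ᵐ s ∂μ, ∀ z, ‖D s z‖ ≤ ℓ (s, z) * c s)
    (hint : Integrable (fun s => (∫ z, ℓ (s, z) * |m (s, z)| ∂ν) * c s) μ) :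
    IsDominatedForm i q μ (fun s v => ∫ z, ⟪D s z, i v⟫ * m (s, z) ∂ν) 0
      (fun s => (∫ z, ℓ (s, z) * |m (s, z)| ∂ν) * c s) where
  measurable := by
    have hproj : Measurable fun q : (S × V) × 𝕏 => (q.1.1, q.2) := by fun_prop
    have hiv : Measurable fun q : (S × V) × 𝕏 => i q.1.2 :=
      i.continuous.measurable.comp (measurable_snd.comp measurable_fst)
    exact (((hD.comp hproj).inner hiv).mul
      (hm.comp hproj)).stronglyMeasurable.integral_prod_right'.measurable
  memLp := MemLp.zero
  integrable := hint
  map_zero s := by simp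
  abs_sub_le := by
    filter_upwards [hℓ.prod_right_ae, hle] with s hs hDs v v'
    have hint (h : H) : Integrable (fun z => ⟪D s z, h⟫ * m (s, z)) ν :=
      integrable_inner_mul hD.of_uncurry_left.aestronglyMeasurable
        (hm.comp measurable_prodMk_left).aestronglyMeasurable hs hDs h
    rw [← integral_sub (hint (i v)) (hint (i v'))]
    simpa only [← sub_mul, ← inner_sub_right, Pi.zero_apply, zero_mul, zero_add]
      using abs_integral_inner_mul_le hs hDs (i v - i v')

end IsDominatedForm

end Form

variable {𝕏 : Type*} [MeasurableSpace 𝕏] {T α β C : ℝ} {ν : Measure 𝕏} {A : ℝ → V → V →L[ℝ] ℝ}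
  {f : ℝ → V → 𝕏 → H} {x : H} {g : ℝ × 𝕏 → ℝ} {X : ℝ → H} {u u₁ u₂ : ℝ → V}

/-- The right-hand side of the skeleton equation along the path `u`, as a functional of the test
vector `v`. -/
noncomputable def skeletonForm (ν : Measure 𝕏) (i : V →L[ℝ] H) (A : ℝ → V → V →L[ℝ] ℝ)
    (f : ℝ → V → 𝕏 → H) (g : ℝ × 𝕏 → ℝ) (u : ℝ → V) (s : ℝ) (v : V) : ℝ :=
  A s (u s) v + ∫ z, ⟪f s (u s) z, i v⟫ * (g (s, z) - 1) ∂ν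

namespace IsSkeletonSolution

theorem memLp_top (hX : IsSkeletonSolution T α ν i A f x g X u) :
    MemLp (fun s => i (u s)) ∞ (volume.restrict (Set.Icc 0 T)) :=
  memLp_top_comp_of_ae_eq hX.2.2.1 hX.1

theorem integrable_norm_rpow (hX : IsSkeletonSolution T α ν i A f x g X u) :
    Integrable (fun s => ‖u s‖ ^ α) (volume.restrict (Set.Icc 0 T)) := by
  obtain ⟨-, hu, -, hint, -⟩ := hX
  exact integrable_of_lintegral_ofReal_lt_top (hu.norm.measurable.pow_const α)
    (fun s => Real.rpow_nonneg (norm_nonneg _) α) hint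

theorem memLp (hα : 0 < α) (hX : IsSkeletonSolution T α ν i A f x g X u) :
    MemLp u (ENNReal.ofReal α) (volume.restrict (Set.Icc 0 T)) := by
  rw [← integrable_norm_rpow_iff hX.2.1.aestronglyMeasurable (by simpa using hα)
    ENNReal.ofReal_ne_top, ENNReal.toReal_ofReal hα.le]
  exact hX.integrable_norm_rpow

theorem integrable_growth (hβ : 0 ≤ β) {φ : ℝ → ℝ} (hφ : IntegrableOn φ (Set.Icc 0 T)) (C : ℝ)
    (hX : IsSkeletonSolution T α ν i A f x g X u) :
    Integrable (fun s => (φ s + C * ‖u s‖ ^ α) * (1 + ‖i (u s)‖ ^ β))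
      (volume.restrict (Set.Icc 0 T)) :=
  integrable_mul_one_add_norm_rpow
    (Integrable.add hφ (hX.integrable_norm_rpow.const_mul C)) hX.memLp_top hβ

theorem integrable_comp [MeasurableSpace V] [BorelSpace V] (hβ : 0 ≤ β) {ρ : V → ℝ}
    (hρm : Measurable ρ) (hρ : ∀ v, |ρ v| ≤ C * (1 + ‖v‖ ^ α) * (1 + ‖i v‖ ^ β))
    (hX : IsSkeletonSolution T α ν i A f x g X u) :
    Integrable (fun s => ρ (u s)) (volume.restrict (Set.Icc 0 T)) := by
  have hconst : IntegrableOn (fun _ : ℝ => C) (Set.Icc 0 T) := integrable_const C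
  refine (hX.integrable_growth hβ hconst C).mono'
    (hρm.comp hX.2.1.measurable).aestronglyMeasurable (ae_of_all _ fun s => ?_)
  simpa only [mul_add, mul_one, Real.norm_eq_abs] using hρ (u s)

theorem apply_zero (hiDense : DenseRange i) (hT : 0 ≤ T)
    (hX : IsSkeletonSolution T α ν i A f x g X u) : X 0 = x := by
  rw [← sub_eq_zero]
  refine hiDense.eq_zero_of_inner_left ℝ fun v => ?_
  rw [inner_sub_left, hX.2.2.2.2 0 (Set.left_mem_Icc.2 hT) v]
  simp

theorem hasWeakDerivOn (hX : IsSkeletonSolution T α ν i A f x g X u)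
    (hA : ∀ v, IntegrableOn (fun s => A s (u s) v) (Set.Icc 0 T))
    (hf : ∀ v, IntegrableOn (fun s => ∫ z, ⟪f s (u s) z, i v⟫ * (g (s, z) - 1) ∂ν)
      (Set.Icc 0 T)) :
    HasWeakDerivOn i X (skeletonForm ν i A f g u) 0 T := by
  have hform (v) : IntegrableOn (skeletonForm ν i A f g u · v) (Set.Icc 0 T) := (hA v).add (hf v)
  have hprim {t : ℝ} (ht : t ∈ Set.Icc 0 T) (v : V) :
      ⟪X t, i v⟫ = ⟪x, i v⟫ + ∫ s in 0..t, skeletonForm ν i A f g u s v := by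
    have hsub : Set.Icc 0 t ⊆ Set.Icc 0 T := Set.Icc_subset_Icc_right ht.2
    rw [hX.2.2.2.2 t ht v, add_assoc,
      ← integral_add ((hA v).mono_set hsub) ((hf v).mono_set hsub),
      intervalIntegral.integral_of_le ht.1, ← integral_Icc_eq_integral_Ioc]
    rfl
  intro s hs t ht v
  have h0 : (0 : ℝ) ∈ Set.Icc 0 T := ⟨le_rfl, hs.1.trans hs.2⟩
  rw [inner_sub_left, hprim hs, hprim ht, add_sub_add_left_eq_sub,
    intervalIntegral.integral_interval_sub_left
      (intervalIntegrable_of_integrableOn_Icc (hform v) h0 ht)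
      (intervalIntegrable_of_integrableOn_Icc (hform v) h0 hs)]

variable [TopologicalSpace.SeparableSpace H] [MeasurableSpace H] [BorelSpace H]
  [TopologicalSpace.SeparableSpace V] [MeasurableSpace V] [BorelSpace V] [SFinite ν]

theorem exists_isDominatedForm (hα : 1 < α) (hβ : 0 ≤ β) {F : ℝ → ℝ}
    (hF : IntegrableOn F (Set.Icc 0 T))
    (hAm : ∀ v : V, Measurable fun q : ℝ × V => A q.1 q.2 v)
    (hfm : Measurable fun q : ℝ × V × 𝕏 => f q.1 q.2.1 q.2.2) (hgm : Measurable g)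
    (hA : ∀ t ∈ Set.Icc (0 : ℝ) T, ∀ v : V,
      ‖A t v‖ ^ (α / (α - 1)) ≤ (F t + C * ‖v‖ ^ α) * (1 + ‖i v‖ ^ β))
    {Lf : ℝ × 𝕏 → ℝ}
    (hLf : Integrable (fun q => Lf q * |g q - 1|) ((volume.restrict (Set.Icc 0 T)).prod ν))
    (hf : ∀ t ∈ Set.Icc (0 : ℝ) T, ∀ (v : V) (z : 𝕏), ‖f t v z‖ ≤ Lf (t, z) * (1 + ‖i v‖))
    (hX : IsSkeletonSolution T α ν i A f x g X u) :
    ∃ c k, IsDominatedForm i (ENNReal.ofReal (α / (α - 1))) (volume.restrict (Set.Icc 0 T))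
      (skeletonForm ν i A f g u) c k ∧ HasWeakDerivOn i X (skeletonForm ν i A f g u) 0 T := by
  have hconj : (α / (α - 1)).HolderConjugate α := (Real.HolderConjugate.conjExponent hα).symm
  have hq : 1 ≤ ENNReal.ofReal (α / (α - 1)) := ENNReal.one_le_ofReal.2 hconj.lt.le
  have hu : Measurable u := hX.2.1.measurable
  have hmem : ∀ᵐ s ∂(volume.restrict (Set.Icc 0 T)), s ∈ Set.Icc 0 T :=
    ae_restrict_mem measurableSet_Icc
  obtain ⟨c, hc, hAc⟩ := exists_memLp_ge_of_rpow_le hconj.pos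
    (fun s => norm_nonneg (A s (u s))) (hX.integrable_growth hβ hF C)
    (hmem.mono fun s hs => hA s hs (u s))
  have hdrift := IsDominatedForm.of_continuousLinearMap (i := i)
    (fun v => (hAm v).comp (measurable_id.prodMk hu)) hc hAc
  have hjump := IsDominatedForm.integral_inner (i := i) (q := ENNReal.ofReal (α / (α - 1)))
    (D := fun s => f s (u s)) (c := fun s => 1 + ‖i (u s)‖)
    (hfm.comp (measurable_fst.prodMk ((hu.comp measurable_fst).prodMk measurable_snd)))
    (hgm.sub_const 1) hLf (hmem.mono fun s hs => hf s hs (u s)) (by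
      simpa only [Real.rpow_one] using
        integrable_mul_one_add_norm_rpow hLf.integral_prod_left hX.memLp_top zero_le_one)
  exact ⟨_, _, hdrift.add hjump,
    hX.hasWeakDerivOn (hdrift.integrable_apply hq) (hjump.integrable_apply hq)⟩

end IsSkeletonSolution

theorem two_mul_skeletonForm_sub_le {s κ : ℝ} {Gf : ℝ × 𝕏 → ℝ}
    (hf₁ : Integrable (fun z => ⟪f s (u₁ s) z, i (u₁ s - u₂ s)⟫ * (g (s, z) - 1)) ν)
    (hf₂ : Integrable (fun z => ⟪f s (u₂ s) z, i (u₁ s - u₂ s)⟫ * (g (s, z) - 1)) ν)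
    (hGf : Integrable (fun z => Gf (s, z) * |g (s, z) - 1|) ν)
    (hlip : ∀ z, ‖f s (u₁ s) z - f s (u₂ s) z‖ ≤ Gf (s, z) * ‖i (u₁ s) - i (u₂ s)‖)
    (hmono : 2 * (A s (u₁ s) (u₁ s - u₂ s) - A s (u₂ s) (u₁ s - u₂ s))
      ≤ κ * ‖i (u₁ s) - i (u₂ s)‖ ^ 2) :
    2 * (skeletonForm ν i A f g u₁ - skeletonForm ν i A f g u₂) s (u₁ s - u₂ s)
      ≤ (κ + 2 * ∫ z, Gf (s, z) * |g (s, z) - 1| ∂ν) * ‖i (u₁ s) - i (u₂ s)‖ ^ 2 := by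
  have hjump := (le_abs_self _).trans (abs_integral_inner_mul_le hGf hlip (i (u₁ s - u₂ s)))
  simp only [inner_sub_left, sub_mul] at hjump
  rw [integral_sub hf₁ hf₂, map_sub] at hjump
  simp only [skeletonForm, Pi.sub_apply, map_sub] at hmono ⊢
  linear_combination hmono + 2 * hjump

variable [TopologicalSpace.SeparableSpace H] [MeasurableSpace H] [BorelSpace H]
  [MeasurableSpace V] [SFinite ν]

theorem ae_two_mul_skeletonForm_sub_le {K : ℝ → ℝ} {ρ : V → ℝ}
    (hfm : Measurable fun q : ℝ × V × 𝕏 => f q.1 q.2.1 q.2.2) (hgm : Measurable g)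
    (hmono : ∀ t ∈ Set.Icc (0 : ℝ) T, ∀ v₁ v₂ : V,
      2 * (A t v₁ (v₁ - v₂) - A t v₂ (v₁ - v₂)) ≤ (K t + ρ v₂) * ‖i v₁ - i v₂‖ ^ 2)
    {Lf Gf : ℝ × 𝕏 → ℝ}
    (hLf : Integrable (fun q => Lf q * |g q - 1|) ((volume.restrict (Set.Icc 0 T)).prod ν))
    (hf : ∀ t ∈ Set.Icc (0 : ℝ) T, ∀ (v : V) (z : 𝕏), ‖f t v z‖ ≤ Lf (t, z) * (1 + ‖i v‖))
    (hGf : Integrable (fun q => Gf q * |g q - 1|) ((volume.restrict (Set.Icc 0 T)).prod ν))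
    (hlip : ∀ t ∈ Set.Icc (0 : ℝ) T, ∀ (v₁ v₂ : V) (z : 𝕏),
      ‖f t v₁ z - f t v₂ z‖ ≤ Gf (t, z) * ‖i v₁ - i v₂‖) :
    ∀ᵐ s ∂(volume.restrict (Set.Icc 0 T)),
      2 * (skeletonForm ν i A f g u₁ - skeletonForm ν i A f g u₂) s (u₁ s - u₂ s)
        ≤ (K s + ρ (u₂ s) + 2 * ∫ z, Gf (s, z) * |g (s, z) - 1| ∂ν)
          * ‖i (u₁ s) - i (u₂ s)‖ ^ 2 := by
  filter_upwards [ae_restrict_mem measurableSet_Icc, hLf.prod_right_ae, hGf.prod_right_ae]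
    with s hs hLs hGs
  have hint (v : V) (h : H) : Integrable (fun z => ⟪f s v z, h⟫ * (g (s, z) - 1)) ν :=
    integrable_inner_mul
      (hfm.comp (measurable_const.prodMk
        (measurable_const.prodMk measurable_id))).aestronglyMeasurable
      ((hgm.comp measurable_prodMk_left).sub_const 1).aestronglyMeasurable hLs (hf s hs v) h
  exact two_mul_skeletonForm_sub_le (hint _ _) (hint _ _) hGs (hlip s hs _ _) (hmono s hs _ _)

end Skeleton

theorem stmt_10_general {𝕏 : Type*} [MeasurableSpace 𝕏]
    {H : Type*} [NormedAddCommGroup H] [InnerProductSpace ℝ H]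
    [TopologicalSpace.SeparableSpace H] [MeasurableSpace H] [BorelSpace H]
    {V : Type*} [NormedAddCommGroup V] [NormedSpace ℝ V]
    [TopologicalSpace.SeparableSpace V] [MeasurableSpace V] [BorelSpace V]
    {T α β C : ℝ} {ν : Measure 𝕏} [SFinite ν] (hα : 1 < α) (hβ : 0 ≤ β)
    {F K : ℝ → ℝ} (hF : IntegrableOn F (Set.Icc 0 T)) (hK : IntegrableOn K (Set.Icc 0 T))
    {i : V →L[ℝ] H} {ρ : V → ℝ} (hρm : Measurable ρ)
    (hρ : ∀ v : V, |ρ v| ≤ C * (1 + ‖v‖ ^ α) * (1 + ‖i v‖ ^ β))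
    (hiDense : DenseRange i) {A : ℝ → V → V →L[ℝ] ℝ}
    (hAm : ∀ v : V, Measurable fun q : ℝ × V => A q.1 q.2 v)
    {f : ℝ → V → 𝕏 → H} (hfm : Measurable fun q : ℝ × V × 𝕏 => f q.1 q.2.1 q.2.2)
    (hmono : ∀ t ∈ Set.Icc (0 : ℝ) T, ∀ v₁ v₂ : V,
      2 * (A t v₁ (v₁ - v₂) - A t v₂ (v₁ - v₂)) ≤ (K t + ρ v₂) * ‖i v₁ - i v₂‖ ^ 2)
    (hA : ∀ t ∈ Set.Icc (0 : ℝ) T, ∀ v : V,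
      ‖A t v‖ ^ (α / (α - 1)) ≤ (F t + C * ‖v‖ ^ α) * (1 + ‖i v‖ ^ β))
    {g : ℝ × 𝕏 → ℝ} (hgm : Measurable g) (hg0 : ∀ q, 0 ≤ g q)
    (hg : ∫⁻ q, ENNReal.ofReal (InformationTheory.klFun (g q))
      ∂((volume.restrict (Set.Icc 0 T)).prod ν) < ⊤)
    {Lf : ℝ × 𝕏 → ℝ} (hLfm : Measurable Lf) (hLf0 : ∀ q, 0 ≤ Lf q)
    (hLfsq : ∫⁻ q, ENNReal.ofReal (Lf q ^ 2) ∂((volume.restrict (Set.Icc 0 T)).prod ν) < ⊤)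
    {p : ℝ} (hp : 1 ≤ p) (hLfexp : HasLocalExpMoment Lf p ((volume.restrict (Set.Icc 0 T)).prod ν))
    (hf : ∀ t ∈ Set.Icc (0 : ℝ) T, ∀ (v : V) (z : 𝕏), ‖f t v z‖ ≤ Lf (t, z) * (1 + ‖i v‖))
    {Gf : ℝ × 𝕏 → ℝ} (hGfm : Measurable Gf) (hGf0 : ∀ q, 0 ≤ Gf q)
    (hGfsq : ∫⁻ q, ENNReal.ofReal (Gf q ^ 2) ∂((volume.restrict (Set.Icc 0 T)).prod ν) < ⊤)
    {r : ℝ} (hr : 1 ≤ r) (hGfexp : HasLocalExpMoment Gf r ((volume.restrict (Set.Icc 0 T)).prod ν))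
    (hlip : ∀ t ∈ Set.Icc (0 : ℝ) T, ∀ (v₁ v₂ : V) (z : 𝕏),
      ‖f t v₁ z - f t v₂ z‖ ≤ Gf (t, z) * ‖i v₁ - i v₂‖)
    {x : H} {X₁ X₂ : ℝ → H} {u₁ u₂ : ℝ → V} (hX₁ : IsSkeletonSolution T α ν i A f x g X₁ u₁)
    (hX₂ : IsSkeletonSolution T α ν i A f x g X₂ u₂) :
    ∀ t ∈ Set.Icc (0 : ℝ) T, X₁ t = X₂ t := by
  intro t ht
  have hconj : (ENNReal.ofReal (α / (α - 1))).HolderConjugate (ENNReal.ofReal α) :=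
    (Real.HolderConjugate.conjExponent hα).symm.ennrealOfReal
  have hq : 1 ≤ ENNReal.ofReal (α / (α - 1)) :=
    ENNReal.HolderConjugate.one_le _ (ENNReal.ofReal α)
  have hα0 : 0 < α := zero_lt_one.trans hα
  have hLf := hLfexp.integrable_mul_abs_sub_one hp hLfm hLf0 hLfsq hgm hg0 hg
  have hGf := hGfexp.integrable_mul_abs_sub_one hr hGfm hGf0 hGfsq hgm hg0 hg
  obtain ⟨c₁, k₁, hΛ₁, hweak₁⟩ := hX₁.exists_isDominatedForm hα hβ hF hAm hfm hgm hA hLf hf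
  obtain ⟨c₂, k₂, hΛ₂, hweak₂⟩ := hX₂.exists_isDominatedForm hα hβ hF hAm hfm hgm hA hLf hf
  have hweak := hweak₁.sub hweak₂ (hΛ₁.integrable_apply hq) (hΛ₂.integrable_apply hq)
  have hwY : ∀ᵐ s ∂(volume.restrict (Set.Icc 0 T)), i ((u₁ - u₂) s) = (X₁ - X₂) s := by
    filter_upwards [hX₁.2.2.1, hX₂.2.2.1] with s hs₁ hs₂
    simp only [Pi.sub_apply, map_sub, hs₁, hs₂]
  have hY0 : (X₁ - X₂) 0 = 0 := by
    have hT := ht.1.trans ht.2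
    rw [Pi.sub_apply, hX₁.apply_zero hiDense hT, hX₂.apply_zero hiDense hT, sub_self]
  have hκ : IntegrableOn
      (fun s => K s + ρ (u₂ s) + 2 * ∫ z, Gf (s, z) * |g (s, z) - 1| ∂ν) (Set.Icc 0 T) :=
    (Integrable.add hK (hX₂.integrable_comp hβ hρm hρ)).add
      (hGf.integral_prod_left.const_mul 2)
  refine sub_eq_zero.1 ((hΛ₁.sub hΛ₂).eq_zero_of_two_mul_le ENNReal.ofReal_ne_top
    ((hX₁.memLp hα0).sub (hX₂.memLp hα0)) (hX₁.1.sub hX₂.1) hwY hweak hY0 hκ ?_ ht)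
  simpa only [Pi.sub_apply, map_sub] using
    ae_two_mul_skeletonForm_sub_le (u₁ := u₁) (u₂ := u₂) hfm hgm hmono hLf hf hGf hlip

theorem stmt_10
    {𝕏 : Type*} [TopologicalSpace 𝕏] [PolishSpace 𝕏] [LocallyCompactSpace 𝕏]
    [MeasurableSpace 𝕏] [BorelSpace 𝕏]
    {H : Type*} [NormedAddCommGroup H] [InnerProductSpace ℝ H]
    [TopologicalSpace.SeparableSpace H] [MeasurableSpace H] [BorelSpace H]
    {V : Type*} [NormedAddCommGroup V] [NormedSpace ℝ V]
    [TopologicalSpace.SeparableSpace V] [MeasurableSpace V] [BorelSpace V]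
    (hVrefl : Function.Surjective (NormedSpace.inclusionInDoubleDual ℝ V))
    (T : ℝ) (hT : 0 < T)
    (ν : Measure 𝕏) [SigmaFinite ν] (hνK : ∀ Kc : Set 𝕏, IsCompact Kc → ν Kc < ⊤)
    (νT : Measure (ℝ × 𝕏)) (hνT : νT = (volume.restrict (Set.Icc 0 T)).prod ν)
    (α β θ C : ℝ) (hα : 1 < α) (hβ : 0 ≤ β) (hθ : 0 < θ) (hC : 0 < C)
    (F K : ℝ → ℝ) (hFnn : ∀ t, 0 ≤ F t) (hKnn : ∀ t, 0 ≤ K t)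
    (hF : IntegrableOn F (Set.Icc 0 T)) (hK : IntegrableOn K (Set.Icc 0 T))
    (ρ : V → ℝ) (hρm : Measurable ρ) (hρnn : ∀ v, 0 ≤ ρ v)
    (hρb : ∀ R : ℝ, ∃ M : ℝ, ∀ v : V, ‖v‖ ≤ R → ρ v ≤ M)
    (i : V →L[ℝ] H) (hiInj : Function.Injective i) (hiDense : DenseRange i)
    (hiCpt : IsCompactOperator (⇑i))
    (A : ℝ → V → V →L[ℝ] ℝ)
    (hAm : ∀ v : V, Measurable fun q : ℝ × V => A q.1 q.2 v)
    (f : ℝ → V → 𝕏 → H)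
    (hfm : Measurable fun q : ℝ × V × 𝕏 => f q.1 q.2.1 q.2.2)
    (h1 : ∀ t ∈ Set.Icc (0 : ℝ) T, ∀ v₁ v₂ v : V,
      Continuous fun s : ℝ => A t (v₁ + s • v₂) v)
    (h2 : ∀ t ∈ Set.Icc (0 : ℝ) T, ∀ v₁ v₂ : V,
      2 * (A t v₁ (v₁ - v₂) - A t v₂ (v₁ - v₂))
          + ∫ z, ‖f t v₁ z - f t v₂ z‖ ^ (2 : ℕ) ∂ν
        ≤ (K t + ρ v₂) * ‖i v₁ - i v₂‖ ^ (2 : ℕ))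
    (h3 : ∀ t ∈ Set.Icc (0 : ℝ) T, ∀ v : V,
      2 * A t v v + θ * ‖v‖ ^ α ≤ F t * (1 + ‖i v‖ ^ (2 : ℕ)))
    (h4 : ∀ t ∈ Set.Icc (0 : ℝ) T, ∀ v : V,
      ‖A t v‖ ^ (α / (α - 1)) ≤ (F t + C * ‖v‖ ^ α) * (1 + ‖i v‖ ^ β))
    (Lf : ℝ × 𝕏 → ℝ) (hLfm : Measurable Lf) (hLfnn : ∀ q, 0 ≤ Lf q)
    (η₀ p Υ : ℝ) (hη₀ : 0 < η₀)
    (hΥ : Υ = max (max (2 * β * (α - 1) * (α + η₀) / α)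
        (4 * (α - 1) * (α + η₀) / α)) (max 4 (β + 2)))
    (hpΥ : Υ ≤ p)
    (hLfint : ∀ r ∈ ({2, 4, β + 2, Υ, Υ / 2} : Set ℝ),
      ∫⁻ q, ENNReal.ofReal (Lf q ^ r) ∂νT < ⊤)
    (hLfH : ∃ δ : ℝ, 0 < δ ∧ ∀ Γ : Set (ℝ × 𝕏), MeasurableSet Γ → νT Γ < ⊤ →
      ∫⁻ q in Γ, ENNReal.ofReal (Real.exp (δ * Lf q ^ p)) ∂νT < ⊤)
    (h5 : ∀ t ∈ Set.Icc (0 : ℝ) T, ∀ (v : V) (z : 𝕏),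
      ‖f t v z‖ ≤ Lf (t, z) * (1 + ‖i v‖))
    (Gf : ℝ × 𝕏 → ℝ) (hGfm : Measurable Gf) (hGfnn : ∀ q, 0 ≤ Gf q)
    (hGfint : ∫⁻ q, ENNReal.ofReal (Gf q ^ (2 : ℕ)) ∂νT < ⊤)
    (hGfH : ∃ δ : ℝ, 0 < δ ∧ ∀ Γ : Set (ℝ × 𝕏), MeasurableSet Γ → νT Γ < ⊤ →
      ∫⁻ q in Γ, ENNReal.ofReal (Real.exp (δ * Gf q ^ (2 : ℝ))) ∂νT < ⊤)
    (h6 : ∀ t ∈ Set.Icc (0 : ℝ) T, ∀ (v₁ v₂ : V) (z : 𝕏),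
      ‖f t v₁ z - f t v₂ z‖ ≤ Gf (t, z) * ‖i v₁ - i v₂‖)
    (hρgrow : ∀ v : V, ρ v ≤ C * (1 + ‖v‖ ^ α) * (1 + ‖i v‖ ^ β))
    (x : H) (g : ℝ × 𝕏 → ℝ) (hgm : Measurable g) (hgnn : ∀ q, 0 ≤ g q)
    (hgL : (∫⁻ q, ENNReal.ofReal (g q * Real.log (g q) - g q + 1) ∂νT) < ⊤)
    (X₁ : ℝ → H) (u₁ : ℝ → V) (X₂ : ℝ → H) (u₂ : ℝ → V)
    (hX₁ : IsSkeletonSolution T α ν i A f x g X₁ u₁)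
    (hX₂ : IsSkeletonSolution T α ν i A f x g X₂ u₂) :
    ∀ t ∈ Set.Icc (0 : ℝ) T, X₁ t = X₂ t := by
  subst hνT
  have hp : 1 ≤ p := by
    have : 4 ≤ Υ := hΥ ▸ (le_max_left _ _).trans (le_max_right _ _)
    linarith
  exact stmt_10_general hα hβ hF hK hρm (fun v => (abs_of_nonneg (hρnn v)).trans_le (hρgrow v))
    hiDense hAm hfm (fun t ht v₁ v₂ => (le_add_of_nonneg_right
      (integral_nonneg fun z => sq_nonneg _)).trans (h2 t ht v₁ v₂)) h4 hgm hgnn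
    (by simpa only [InformationTheory.klFun, add_sub_right_comm] using hgL) hLfm hLfnn
    (by simpa only [Real.rpow_two] using hLfint 2 (by simp)) hp hLfH h5 hGfm hGfnn hGfint
    one_le_two hGfH h6 hX₁ hX₂
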